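/- Let k be a field, let Q₁, Q₂, Q₃ be homogeneous degree-2 polynomials in k[u,v], and set P₁ = Q₂Q₃, P₂ = Q₁Q₃, P₃ = Q₁Q₂. Then det A_{P₁,P₂,P₃} = Res(Q₁,Q₂) · Res(Q₂,Q₃) · Res(Q₁,Q₃). -/

import Mathlib

open MvPolynomial

noncomputable section

/-- The coefficient of `u^i v^j` in a polynomial in `k[u,v]`
(variables `X 0 = u`, `X 1 = v`). -/
def coeffUV {k : Type*} [Field k] (i j : ℕ) (P : MvPolynomial (Fin 2) k) : k :=
  MvPolynomial.coeff (Finsupp.single 0 i + Finsupp.single 1 j) P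

/-- For homogeneous degree-4 polynomials `P₁, P₂, P₃` in `k[u,v]`, the `6×6` matrix
whose columns are the coefficient vectors of `u·P₁, v·P₁, u·P₂, v·P₂, u·P₃, v·P₃`
with respect to the basis `u⁵, u⁴v, u³v², u²v³, uv⁴, v⁵`. -/
def Amat {k : Type*} [Field k] (P₁ P₂ P₃ : MvPolynomial (Fin 2) k) :
    Matrix (Fin 6) (Fin 6) k :=
  Matrix.of fun i j =>
    coeffUV (5 - (i : ℕ)) (i : ℕ)
      ((![X 0 * P₁, X 1 * P₁, X 0 * P₂, X 1 * P₂, X 0 * P₃, X 1 * P₃] :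
          Fin 6 → MvPolynomial (Fin 2) k) j)

/-- The resultant of two binary quadratic forms
`Q = q₂u² + q₁uv + q₀v²` and `Q' = q₂'u² + q₁'uv + q₀'v²`:
`(q₂q₀' − q₀q₂')² − (q₂q₁' − q₁q₂')(q₁q₀' − q₀q₁')`. -/
def Res2 {k : Type*} [Field k] (Q Q' : MvPolynomial (Fin 2) k) : k :=
  (coeffUV 2 0 Q * coeffUV 0 2 Q' - coeffUV 0 2 Q * coeffUV 2 0 Q') ^ 2 -
    (coeffUV 2 0 Q * coeffUV 1 1 Q' - coeffUV 1 1 Q * coeffUV 2 0 Q') *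
      (coeffUV 1 1 Q * coeffUV 0 2 Q' - coeffUV 0 2 Q * coeffUV 1 1 Q')


theorem quad_eq {k : Type*} [Field k] (Q : MvPolynomial (Fin 2) k) (h : Q.IsHomogeneous 2) :
    Q = C (coeffUV 2 0 Q) * X 0 ^ 2 + C (coeffUV 1 1 Q) * (X 0 * X 1) +
      C (coeffUV 0 2 Q) * X 1 ^ 2 := by
  have key : ∀ (c : k) (i j : ℕ), C c * (X 0 ^ i * X 1 ^ j) =
      (monomial (Finsupp.single (0 : Fin 2) i + Finsupp.single 1 j) c) := by
    intro c i j
    rw [X_pow_eq_monomial, X_pow_eq_monomial, monomial_mul, C_mul_monomial]; simp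
  have e1 := key (coeffUV 2 0 Q) 2 0
  have e2 := key (coeffUV 1 1 Q) 1 1
  have e3 := key (coeffUV 0 2 Q) 0 2
  simp only [pow_zero, mul_one, pow_one, one_mul] at e1 e2 e3
  rw [e1, e2, e3]
  ext m
  have hm : m = Finsupp.single (0 : Fin 2) (m 0) + Finsupp.single 1 (m 1) := by
    ext i; fin_cases i <;> simp
  by_cases hd : m 0 + m 1 = 2
  · have : (m 0 = 2 ∧ m 1 = 0) ∨ (m 0 = 1 ∧ m 1 = 1) ∨ (m 0 = 0 ∧ m 1 = 2) := by omega
    rcases this with ⟨a, b⟩ | ⟨a, b⟩ | ⟨a, b⟩ <;> rw [a, b] at hm <;> subst hm <;>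
      simp [coeff_add, coeff_monomial, coeffUV, Finsupp.ext_iff, Fin.forall_fin_two]
  · have h0 : coeff m Q = 0 := by
      apply h.coeff_eq_zero
      rw [Finsupp.degree_eq_sum]
      simpa [Fin.sum_univ_two] using hd
    rw [h0]
    simp only [coeff_add, coeff_monomial]
    rw [if_neg, if_neg, if_neg] <;> first | (rintro rfl; simp at hd) | simp

theorem coeffUV_X0 {k : Type*} [Field k] (i j : ℕ) (P : MvPolynomial (Fin 2) k) :
    coeffUV i j (X 0 * P) = if i = 0 then 0 else coeffUV (i - 1) j P := by
  unfold coeffUV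
  rw [coeff_X_mul']
  rcases i with _ | i
  · simp
  · have : (Finsupp.single (0 : Fin 2) (i + 1) + Finsupp.single 1 j - Finsupp.single 0 1 :
        Fin 2 →₀ ℕ) = Finsupp.single 0 i + Finsupp.single 1 j := by
      ext t; fin_cases t <;> simp
    rw [this]; simp

theorem coeffUV_X1 {k : Type*} [Field k] (i j : ℕ) (P : MvPolynomial (Fin 2) k) :
    coeffUV i j (X 1 * P) = if j = 0 then 0 else coeffUV i (j - 1) P := by
  unfold coeffUV
  rw [coeff_X_mul']
  rcases j with _ | j
  · simp
  · have : (Finsupp.single (0 : Fin 2) i + Finsupp.single 1 (j + 1) - Finsupp.single 1 1 :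
        Fin 2 →₀ ℕ) = Finsupp.single 0 i + Finsupp.single 1 j := by
      ext t; fin_cases t <;> simp
    rw [this]; simp

theorem coeffUV_add {k : Type*} [Field k] (i j : ℕ) (P R : MvPolynomial (Fin 2) k) :
    coeffUV i j (P + R) = coeffUV i j P + coeffUV i j R := by simp [coeffUV]

theorem coeffUV_Cmul {k : Type*} [Field k] (i j : ℕ) (c : k) (R : MvPolynomial (Fin 2) k) :
    coeffUV i j (C c * R) = c * coeffUV i j R := by simp [coeffUV]

theorem coeffUV_quad_mul {k : Type*} [Field k] (i j : ℕ) (Q P : MvPolynomial (Fin 2) k)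
    (h : Q.IsHomogeneous 2) :
    coeffUV i j (Q * P) =
      coeffUV 2 0 Q * (if i = 0 then 0 else if i - 1 = 0 then 0 else coeffUV (i - 1 - 1) j P) +
      coeffUV 1 1 Q * (if i = 0 then 0 else if j = 0 then 0 else coeffUV (i - 1) (j - 1) P) +
      coeffUV 0 2 Q * (if j = 0 then 0 else if j - 1 = 0 then 0 else coeffUV i (j - 1 - 1) P) := by
  conv_lhs => rw [quad_eq Q h]
  simp only [add_mul, coeffUV_add, mul_assoc, coeffUV_Cmul, pow_two, coeffUV_X0, coeffUV_X1]

theorem det_id {k : Type*} [Field k] (a b c d e f g h i : k) :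
    Matrix.det !![
      d*g, 0, a*g, 0, a*d, 0;
      d*h+e*g, d*g, a*h+b*g, a*g, a*e+b*d, a*d;
      d*i+e*h+f*g, d*h+e*g, a*i+b*h+c*g, a*h+b*g, a*f+b*e+c*d, a*e+b*d;
      e*i+f*h, d*i+e*h+f*g, b*i+c*h, a*i+b*h+c*g, b*f+c*e, a*f+b*e+c*d;
      f*i, e*i+f*h, c*i, b*i+c*h, c*f, b*f+c*e;
      0, f*i, 0, c*i, 0, c*f] =
    ((a*f-c*d)^2-(a*e-b*d)*(b*f-c*e)) * ((d*i-f*g)^2-(d*h-e*g)*(e*i-f*h)) *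
    ((a*i-c*g)^2-(a*h-b*g)*(b*i-c*h)) := by
  simp [Matrix.det_succ_row_zero, Fin.sum_univ_succ, Fin.succAbove]
  ring

theorem Amat_eq {k : Type*} [Field k] (Q₁ Q₂ Q₃ : MvPolynomial (Fin 2) k)
    (h₁ : Q₁.IsHomogeneous 2) (h₂ : Q₂.IsHomogeneous 2) (a b c d e f g h i : k)
    (ha : coeffUV 2 0 Q₁ = a) (hb : coeffUV 1 1 Q₁ = b) (hc : coeffUV 0 2 Q₁ = c)
    (hd : coeffUV 2 0 Q₂ = d) (he : coeffUV 1 1 Q₂ = e) (hf : coeffUV 0 2 Q₂ = f)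
    (hg : coeffUV 2 0 Q₃ = g) (hh : coeffUV 1 1 Q₃ = h) (hi : coeffUV 0 2 Q₃ = i) :
    Amat (Q₂ * Q₃) (Q₁ * Q₃) (Q₁ * Q₂) = !![
      d*g, 0, a*g, 0, a*d, 0;
      d*h+e*g, d*g, a*h+b*g, a*g, a*e+b*d, a*d;
      d*i+e*h+f*g, d*h+e*g, a*i+b*h+c*g, a*h+b*g, a*f+b*e+c*d, a*e+b*d;
      e*i+f*h, d*i+e*h+f*g, b*i+c*h, a*i+b*h+c*g, b*f+c*e, a*f+b*e+c*d;
      f*i, e*i+f*h, c*i, b*i+c*h, c*f, b*f+c*e;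
      0, f*i, 0, c*i, 0, c*f] := by
  ext s t
  fin_cases s <;> fin_cases t <;>
    simp [Amat, coeffUV_X0, coeffUV_X1, coeffUV_quad_mul _ _ _ _ h₁,
      coeffUV_quad_mul _ _ _ _ h₂, ha, hb, hc, hd, he, hf, hg, hh, hi]

/-- Proposition `res=det`: if `P₁ = Q₂Q₃`, `P₂ = Q₁Q₃`, `P₃ = Q₁Q₂`
for homogeneous degree-2 polynomials `Q₁, Q₂, Q₃`, then
`det A_{P₁,P₂,P₃} = Res(Q₁,Q₂) · Res(Q₂,Q₃) · Res(Q₁,Q₃)`. -/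
theorem stmt0 {k : Type*} [Field k] (Q₁ Q₂ Q₃ : MvPolynomial (Fin 2) k)
    (h₁ : Q₁.IsHomogeneous 2) (h₂ : Q₂.IsHomogeneous 2) (h₃ : Q₃.IsHomogeneous 2) :
    (Amat (Q₂ * Q₃) (Q₁ * Q₃) (Q₁ * Q₂)).det =
      Res2 Q₁ Q₂ * Res2 Q₂ Q₃ * Res2 Q₁ Q₃ := by
  rw [Amat_eq Q₁ Q₂ Q₃ h₁ h₂ _ _ _ _ _ _ _ _ _ rfl rfl rfl rfl rfl rfl rfl rfl rfl, det_id]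
  rfl
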